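/- arXiv:math/9905136 — 3 statements merged into one kernel-verified Lean document; each statement's English description precedes it below -/
import Mathlib

section
/- Let V be a real vector space, B : V × V → ℝ a symmetric bilinear form, and suppose V = H ⊕ J is an internal direct sum of two subspaces such that B(h, j) = 0 for all h ∈ H and j ∈ J. Then ind(B, V) = ind(B, H) + ind(B, J) (an identity in ℕ ∪ {∞}). -/
/-- The index of a (not necessarily bilinear) form `B` on the set `K`: the supremum of the
dimensions of the finite-dimensional subspaces contained in `K` on which `B` is negative
definite, as an element of `ℕ∞`. -/
noncomputable def indexOn {X : Type*} [AddCommGroup X] [Module ℝ X]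
    (B : X → X → ℝ) (K : Set X) : ℕ∞ :=
  ⨆ (U : Submodule ℝ X) (_ : (U : Set X) ⊆ K ∧ FiniteDimensional ℝ U ∧
      ∀ v ∈ U, v ≠ 0 → B v v < 0), (Module.finrank ℝ U : ℕ∞)

theorem aux_decomp {V : Type*} [AddCommGroup V] [Module ℝ V] [FiniteDimensional ℝ V]
    (b : V →ₗ[ℝ] V →ₗ[ℝ] ℝ) (hs : ∀ x y, b x y = b y x) :
    ∃ W W' : Submodule ℝ V, (∀ v ∈ W, v ≠ 0 → b v v < 0) ∧ (∀ v ∈ W', 0 ≤ b v v) ∧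
      Module.finrank ℝ V ≤ Module.finrank ℝ W + Module.finrank ℝ W' := by
  obtain ⟨W, hW, hmax⟩ := (wellFounded_gt (α := Submodule ℝ V)).has_min
    {W | ∀ v ∈ W, v ≠ 0 → b v v < 0} ⟨⊥, by
      intro v hv h0
      exact absurd ((Submodule.mem_bot ℝ).1 hv) h0⟩
  let f : V →ₗ[ℝ] Module.Dual ℝ W := W.subtype.dualMap ∘ₗ b
  have hf : ∀ u ∈ LinearMap.ker f, ∀ w ∈ W, b u w = 0 := by
    intro u hu w hw
    have := LinearMap.congr_fun (LinearMap.mem_ker.1 hu) ⟨w, hw⟩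
    simpa [f] using this
  refine ⟨W, LinearMap.ker f, hW, ?_, ?_⟩
  · intro u hu
    by_contra hneg
    push Not at hneg
    have huW : u ∉ W := fun h => by
      have := hf u hu u h
      linarith
    refine hmax (W ⊔ Submodule.span ℝ {u}) ?_ ?_
    · intro v hv h0
      obtain ⟨w, hw, z, hz, rfl⟩ := Submodule.mem_sup.1 hv
      obtain ⟨c, rfl⟩ := Submodule.mem_span_singleton.1 hz
      have h1 := hf u hu w hw
      have h2 : b w u = 0 := by rw [hs, h1]
      have e : b (w + c • u) (w + c • u) = b w w + c * c * b u u := by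
        simp [h1, h2]; ring
      rw [e]
      by_cases hw0 : w = 0
      · subst hw0
        have hc : c ≠ 0 := by
          rintro rfl
          simp at h0
        have : 0 < c * c := mul_self_pos.2 hc
        simp only [map_zero]
        nlinarith
      · have := hW w hw hw0
        nlinarith [mul_self_nonneg c]
    · refine lt_of_le_of_ne le_sup_left fun h => huW ?_
      rw [h]
      exact Submodule.mem_sup_right (Submodule.mem_span_singleton_self u)
  · have h1 := LinearMap.finrank_range_add_finrank_ker f
    have h2 : Module.finrank ℝ (LinearMap.range f) ≤ Module.finrank ℝ W := by
      rw [← Subspace.dual_finrank_eq (K := ℝ) (V := W)]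
      exact Submodule.finrank_le _
    omega

theorem aux_map {X V : Type*} [AddCommGroup X] [Module ℝ X] [AddCommGroup V] [Module ℝ V]
    [FiniteDimensional ℝ V] (B : X →ₗ[ℝ] X →ₗ[ℝ] ℝ) (K : Submodule ℝ X) (f : V →ₗ[ℝ] X)
    (hfK : ∀ v, f v ∈ K) (W : Submodule ℝ V) (hW : ∀ v ∈ W, v ≠ 0 → B (f v) (f v) < 0) :
    (Module.finrank ℝ W : ℕ∞) ≤ indexOn (fun x y => B x y) (K : Set X) := by
  have hinj : Function.Injective (f ∘ₗ W.subtype) := by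
    rw [← LinearMap.ker_eq_bot, LinearMap.ker_eq_bot']
    intro w hw
    by_contra h0
    have h := hW w w.2 (by simpa using h0)
    have hw' : f w = 0 := hw
    simp [hw'] at h
  rw [← LinearMap.finrank_range_of_inj hinj]
  refine le_iSup₂_of_le (LinearMap.range (f ∘ₗ W.subtype)) ⟨?_, inferInstance, ?_⟩ le_rfl
  · rintro _ ⟨w, rfl⟩
    exact hfK _
  · rintro _ ⟨w, rfl⟩ h0
    refine hW w w.2 ?_
    rintro h
    apply h0
    simp [h]

/-- If `X = H ⊕ J` is an internal direct sum which is orthogonal with respect to a symmetric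
bilinear form `B`, then the index of `B` on `X` is the sum of the indices of `B` on `H` and
on `J`. -/
theorem index_of_orthogonal_direct_sum {X : Type*} [AddCommGroup X] [Module ℝ X]
    (B : X →ₗ[ℝ] X →ₗ[ℝ] ℝ) (hsym : ∀ x y, B x y = B y x)
    (H J : Submodule ℝ X) (hcompl : IsCompl H J)
    (horth : ∀ h ∈ H, ∀ j ∈ J, B h j = 0) :
    indexOn (fun x y => B x y) Set.univ =
      indexOn (fun x y => B x y) (H : Set X) + indexOn (fun x y => B x y) (J : Set X) := by
  have expand : ∀ h ∈ H, ∀ j ∈ J, B (h + j) (h + j) = B h h + B j j := by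
    intro h hh j hj
    have h1 := horth h hh j hj
    have h2 : B j h = 0 := by rw [hsym, h1]
    simp [h1, h2]
  apply le_antisymm
  · refine iSup₂_le ?_
    rintro U ⟨-, hfd, hU⟩
    let P : X →ₗ[ℝ] X := H.subtype ∘ₗ H.projectionOnto J hcompl
    let Q : X →ₗ[ℝ] X := LinearMap.id - P
    have hP : ∀ x, P x ∈ H := fun x => (H.projectionOnto J hcompl x).2
    have hQ : ∀ x, Q x ∈ J := by
      intro x
      rw [← Submodule.ker_projectionOnto hcompl, LinearMap.mem_ker]
      change H.projectionOnto J hcompl (x - (H.projectionOnto J hcompl x : X)) = 0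
      rw [map_sub, Submodule.projectionOnto_apply_left, sub_self]
    have hPQ : ∀ x, B x x = B (P x) (P x) + B (Q x) (Q x) := by
      intro x
      rw [← expand _ (hP x) _ (hQ x)]
      simp [Q]
    obtain ⟨W, W', hW, hW', hd⟩ := aux_decomp
      (B.compl₁₂ (P ∘ₗ U.subtype) (P ∘ₗ U.subtype)) (fun x y => hsym _ _)
    have a1 := aux_map B H (P ∘ₗ U.subtype) (fun v => hP v) W hW
    have a2 := aux_map B J (Q ∘ₗ U.subtype) (fun v => hQ v) W' (by
      intro v hv h0
      have h1 : 0 ≤ B (P v) (P v) := hW' v hv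
      have h2 : B v v < 0 := hU v v.2 (by simpa using h0)
      have h3 := hPQ v
      change B (Q v) (Q v) < 0
      linarith)
    calc (Module.finrank ℝ U : ℕ∞) ≤ ((Module.finrank ℝ W + Module.finrank ℝ W' : ℕ) : ℕ∞) := by
          exact_mod_cast hd
      _ ≤ _ := by
          push_cast
          exact add_le_add a1 a2
  · have hbot : ∀ K : Submodule ℝ X, ∃ U : Submodule ℝ X, (U : Set X) ⊆ (K : Set X) ∧
        FiniteDimensional ℝ U ∧ ∀ v ∈ U, v ≠ 0 → B v v < 0 :=
      fun K => ⟨⊥, by simp, inferInstance,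
        fun v hv h0 => absurd ((Submodule.mem_bot ℝ).1 hv) h0⟩
    refine ENat.biSup_add_biSup_le' (hbot H) (hbot J) ?_
    rintro U ⟨hUH, hUf, hU⟩ U' ⟨hUJ, hUf', hU'⟩
    have hdis : U ⊓ U' = ⊥ := (hcompl.disjoint.mono (SetLike.coe_subset_coe.1 hUH) (SetLike.coe_subset_coe.1 hUJ)).eq_bot
    have hd := Submodule.finrank_sup_add_finrank_inf_eq U U'
    rw [hdis, finrank_bot, add_zero] at hd
    rw [← Nat.cast_add, ← hd]
    refine le_iSup₂_of_le (U ⊔ U') ⟨Set.subset_univ _, inferInstance, ?_⟩ le_rfl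
    intro v hv h0
    obtain ⟨w, hw, z, hz, rfl⟩ := Submodule.mem_sup.1 hv
    change B (w + z) (w + z) < 0
    rw [expand w (hUH hw) z (hUJ hz)]
    by_cases hw0 : w = 0
    · subst hw0
      have := hU' z hz (by simpa using h0)
      simpa using this
    · have h1 : B w w < 0 := hU w hw hw0
      by_cases hz0 : z = 0
      · subst hz0
        simpa using h1
      · have h2 : B z z < 0 := hU' z hz hz0
        linarith
end

section
/- Let H be a real Hilbert space, B : H × H → ℝ a continuous (bounded) symmetric bilinear form, and D ⊆ H a dense subspace. Then ind(B, D) = ind(B, H): the restriction of B to the dense subspace D has the same index as B. -/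
/-- A continuous symmetric bilinear form on a real Hilbert space has the same index on any
dense subspace as on the whole space. -/
theorem index_of_dense_subspace {H : Type*} [NormedAddCommGroup H] [InnerProductSpace ℝ H]
    [CompleteSpace H]
    (B : H →L[ℝ] H →L[ℝ] ℝ) (hsym : ∀ x y : H, B x y = B y x)
    (D : Submodule ℝ H) (hD : Dense (D : Set H)) :
    indexOn (fun x y => B x y) (D : Set H) = indexOn (fun x y => B x y) Set.univ := by
  apply le_antisymm
  · unfold indexOn
    refine iSup₂_le fun U hU => ?_
    exact le_iSup₂_of_le U ⟨Set.subset_univ _, hU.2⟩ le_rfl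
  · unfold indexOn
    refine iSup₂_le fun U hU => ?_
    obtain ⟨-, hfin, hneg⟩ := hU
    set n := Module.finrank ℝ U with hn
    let b := Module.finBasis ℝ U
    let F : (Fin n → H) → (Fin n → ℝ) → ℝ := fun f c => B (∑ i, c i • f i) (∑ i, c i • f i)
    have hF : Continuous fun p : (Fin n → H) × (Fin n → ℝ) => F p.1 p.2 := by
      have h1 : Continuous fun p : (Fin n → H) × (Fin n → ℝ) => ∑ i, p.2 i • p.1 i := by
        fun_prop
      exact (B.continuous.comp h1).clm_apply h1
    let e : Fin n → H := fun i => (b i : H)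
    have he : ∀ c : Fin n → ℝ, c ≠ 0 → F e c < 0 := by
      intro c hc
      have h1 : (∑ i, c i • e i) = ((∑ i, c i • b i : U) : H) := by simp [e]
      have h2 : (∑ i, c i • b i : U) ≠ 0 := by
        intro h
        apply hc
        funext i
        exact Fintype.linearIndependent_iff.1 b.linearIndependent c h i
      change B (∑ i, c i • e i) (∑ i, c i • e i) < 0
      rw [h1]
      exact hneg _ (Subtype.mem _) (fun h => h2 (Subtype.ext h))
    have hev : ∀ᶠ f in nhds e, ∀ c ∈ Metric.sphere (0 : Fin n → ℝ) 1, F f c < 0 := by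
      apply (isCompact_sphere (0 : Fin n → ℝ) 1).eventually_forall_of_forall_eventually
      intro c hc
      have hc0 : c ≠ 0 := by
        rintro rfl
        simp at hc
      exact hF.continuousAt.eventually_lt continuousAt_const (he c hc0)
    have hdense : Dense (Set.pi Set.univ fun _ : Fin n => (D : Set H)) :=
      dense_pi _ fun _ _ => hD
    obtain ⟨f, hfD, hf⟩ := (mem_closure_iff_frequently.1 (hdense e)).and_eventually hev |>.exists
    have hf' : ∀ c : Fin n → ℝ, c ≠ 0 → F f c < 0 := by
      intro c hc
      have hpos : 0 < ‖c‖ := norm_pos_iff.2 hc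
      have h1 := hf (‖c‖⁻¹ • c) (by simp [norm_smul, hpos.ne'])
      have h2 : F f (‖c‖⁻¹ • c) = ‖c‖⁻¹ * (‖c‖⁻¹ * F f c) := by
        simp only [F, Pi.smul_apply, smul_eq_mul, mul_smul, ← Finset.smul_sum, map_smul,
          _root_.smul_apply]
      rw [h2] at h1
      by_contra! h
      have : 0 ≤ ‖c‖⁻¹ * (‖c‖⁻¹ * F f c) := by positivity
      linarith
    have hli : LinearIndependent ℝ f := by
      rw [Fintype.linearIndependent_iff]
      intro c hc
      by_contra! h
      obtain ⟨i, hi⟩ := h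
      have := hf' c (fun h => hi (by simp [h]))
      simp only [F, hc, map_zero, lt_irrefl] at this
    refine le_iSup₂_of_le (Submodule.span ℝ (Set.range f)) ⟨?_, ?_, ?_⟩ ?_
    · apply Submodule.span_le.2
      rintro _ ⟨i, rfl⟩
      exact hfD i trivial
    · exact FiniteDimensional.span_of_finite ℝ (Set.finite_range f)
    · intro v hv hv0
      obtain ⟨c, rfl⟩ := (Submodule.mem_span_range_iff_exists_fun ℝ).1 hv
      exact hf' c (by rintro rfl; simp at hv0)
    · rw [finrank_span_eq_card hli]
      simp
end

section
/- Let V be a finite-dimensional real vector space and s ↦ B_s a continuous map from ℝ to the space of symmetric bilinear forms on V. Then for every t ∈ ℝ there exists ε > 0 such that for all s with |s − t| < ε one has ind(B_t, V) ≤ ind(B_s, V) ≤ ind(B_t, V) + dim K_t, where K_t = {v ∈ V : B_t(v, w) = 0 for all w ∈ V} is the radical of B_t. -/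
theorem aux_persist {X : Type*} [AddCommGroup X] [Module ℝ X] {ι : Type*} [Fintype ι]
    (B : ℝ → X →ₗ[ℝ] X →ₗ[ℝ] ℝ)
    (hcont : ∀ x y : X, Continuous fun s => B s x y) (f : ι → X) (t : ℝ)
    (h : ∀ c : ι → ℝ, c ≠ 0 → 0 < B t (∑ i, c i • f i) (∑ i, c i • f i)) :
    ∀ᶠ s in nhds t, ∀ c : ι → ℝ, c ≠ 0 → 0 < B s (∑ i, c i • f i) (∑ i, c i • f i) := by
  have hj : Continuous fun p : ℝ × (ι → ℝ) =>
      B p.1 (∑ i, p.2 i • f i) (∑ i, p.2 i • f i) := by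
    simp only [map_sum, map_smul, LinearMap.sum_apply, LinearMap.smul_apply, smul_eq_mul]
    refine continuous_finsetSum _ fun i _ => ?_
    refine Continuous.mul (by fun_prop) (continuous_finsetSum _ fun j _ => ?_)
    exact Continuous.mul (by fun_prop) ((hcont _ _).comp continuous_fst)
  have h1 : ∀ᶠ s in nhds t, ∀ c ∈ Metric.sphere (0 : ι → ℝ) 1,
      0 < B s (∑ i, c i • f i) (∑ i, c i • f i) := by
    refine (isCompact_sphere (0 : ι → ℝ) 1).eventually_forall_of_forall_eventually ?_
    intro c hc
    have hc0 : c ≠ 0 := by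
      rintro rfl
      simp at hc
    exact hj.continuousAt.eventually (lt_mem_nhds (h c hc0))
  filter_upwards [h1] with s hs c hc
  have hn : 0 < ‖c‖ := norm_pos_iff.2 hc
  have h2 := hs (‖c‖⁻¹ • c) (by simp [norm_smul, hn.ne'])
  have h3 : ∑ i, (‖c‖⁻¹ • c) i • f i = ‖c‖⁻¹ • ∑ i, c i • f i := by
    simp [Finset.smul_sum, smul_smul]
  rw [h3] at h2
  simp only [map_smul, LinearMap.smul_apply, smul_eq_mul] at h2
  have h4 : 0 < ‖c‖⁻¹ := inv_pos.2 hn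
  exact (mul_pos_iff_of_pos_left h4).1 ((mul_pos_iff_of_pos_left h4).1 h2)

theorem aux_diag {X : Type*} [AddCommGroup X] [Module ℝ X] {ι : Type*} [Fintype ι]
    (B : X →ₗ[ℝ] X →ₗ[ℝ] ℝ) (f : ι → X) (hf : ∀ i j, i ≠ j → B (f i) (f j) = 0) (c : ι → ℝ) :
    B (∑ i, c i • f i) (∑ i, c i • f i) = ∑ i, c i ^ 2 * B (f i) (f i) := by
  simp only [map_sum, map_smul, LinearMap.sum_apply, LinearMap.smul_apply, smul_eq_mul]
  refine Finset.sum_congr rfl fun i _ => ?_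
  rw [Finset.sum_eq_single i]
  · ring
  · intro j _ hj
    simp [hf _ _ hj, hf _ _ hj.symm]
  · simp

theorem aux_diag_pos {X : Type*} [AddCommGroup X] [Module ℝ X] {ι : Type*} [Fintype ι]
    (B : X →ₗ[ℝ] X →ₗ[ℝ] ℝ) (f : ι → X) (hf : ∀ i j, i ≠ j → B (f i) (f j) = 0)
    (hp : ∀ i, 0 < B (f i) (f i)) (c : ι → ℝ) (hc : c ≠ 0) :
    0 < B (∑ i, c i • f i) (∑ i, c i • f i) := by
  rw [aux_diag B f hf]
  obtain ⟨i, hi⟩ := Function.ne_iff.1 hc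
  refine Finset.sum_pos' (fun j _ => mul_nonneg (sq_nonneg _) (hp j).le)
    ⟨i, Finset.mem_univ _, mul_pos (pow_pos_of_ne hi) (hp i)⟩
where
  pow_pos_of_ne {a : ℝ} (h : a ≠ 0) : 0 < a ^ 2 := by positivity

theorem aux_upper {X : Type*} [AddCommGroup X] [Module ℝ X] [FiniteDimensional ℝ X]
    {ι : Type*} [Fintype ι] (B : X →ₗ[ℝ] X →ₗ[ℝ] ℝ) (f : ι → X) (hl : LinearIndependent ℝ f)
    (h : ∀ c : ι → ℝ, 0 ≤ B (∑ i, c i • f i) (∑ i, c i • f i)) (m : ℕ)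
    (hm : Module.finrank ℝ X ≤ m + Fintype.card ι) :
    indexOn (fun x y => B x y) Set.univ ≤ m := by
  refine iSup₂_le fun U hU => ?_
  have hd : Disjoint U (Submodule.span ℝ (Set.range f)) := by
    rw [Submodule.disjoint_def]
    intro x hx hx'
    obtain ⟨c, rfl⟩ := (Submodule.mem_span_range_iff_exists_fun ℝ).1 hx'
    by_contra h0
    exact absurd (hU.2.2 _ hx h0) (not_lt.2 (h c))
  have h1 := Submodule.finrank_add_finrank_le_of_disjoint hd
  rw [finrank_span_eq_card hl] at h1
  exact_mod_cast (by omega : Module.finrank ℝ U ≤ m)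

theorem aux_lower {X : Type*} [AddCommGroup X] [Module ℝ X] [FiniteDimensional ℝ X]
    {ι : Type*} [Fintype ι] (B : X →ₗ[ℝ] X →ₗ[ℝ] ℝ) (f : ι → X) (hl : LinearIndependent ℝ f)
    (h : ∀ c : ι → ℝ, c ≠ 0 → B (∑ i, c i • f i) (∑ i, c i • f i) < 0) :
    (Fintype.card ι : ℕ∞) ≤ indexOn (fun x y => B x y) Set.univ := by
  rw [← finrank_span_eq_card hl]
  refine le_iSup₂_of_le (Submodule.span ℝ (Set.range f))
    ⟨Set.subset_univ _, inferInstance, ?_⟩ le_rfl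
  intro x hx h0
  obtain ⟨c, rfl⟩ := (Submodule.mem_span_range_iff_exists_fun ℝ).1 hx
  exact h c (by rintro rfl; simp at h0)

/-- For a continuous one-parameter family `s ↦ B s` of symmetric bilinear forms on a
finite-dimensional real vector space, for every `t` and every `s` sufficiently close to `t`
one has `ind (B t) ≤ ind (B s) ≤ ind (B t) + dim (radical (B t))`. -/
theorem index_jump_bounded_by_radical {X : Type*} [AddCommGroup X] [Module ℝ X]
    [FiniteDimensional ℝ X]
    (B : ℝ → X →ₗ[ℝ] X →ₗ[ℝ] ℝ)
    (hsym : ∀ s x y, B s x y = B s y x)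
    (hcont : ∀ x y : X, Continuous fun s => B s x y) :
    ∀ t : ℝ, ∃ ε > 0, ∀ s : ℝ, |s - t| < ε →
      indexOn (fun x y => B t x y) Set.univ ≤ indexOn (fun x y => B s x y) Set.univ ∧
      indexOn (fun x y => B s x y) Set.univ ≤ indexOn (fun x y => B t x y) Set.univ +
        (Module.finrank ℝ (LinearMap.ker (B t)) : ℕ∞) := by
  intro t
  classical
  obtain ⟨v, hv⟩ := LinearMap.BilinForm.exists_orthogonal_basis (B := B t)
    (LinearMap.isSymm_def.2 (hsym t))
  have ho : ∀ i j, i ≠ j → B t (v i) (v j) = 0 := fun i j hij => hv hij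
  let d := fun i => B t (v i) (v i)
  have hli : ∀ p : Fin (Module.finrank ℝ X) → Prop,
      LinearIndependent ℝ (fun i : {i // p i} => v i) := fun p =>
    v.linearIndependent.comp _ Subtype.val_injective
  have hoo : ∀ p : Fin (Module.finrank ℝ X) → Prop, ∀ i j : {i // p i}, i ≠ j →
      B t (v i) (v j) = 0 := fun p i j hij => ho _ _ fun h => hij (Subtype.ext h)
  have hpos := aux_persist B hcont (fun i : {i // 0 < d i} => v i) t
    (aux_diag_pos (B t) _ (hoo _) fun i => i.2)
  have hneg := aux_persist (fun s => - B s)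
    (fun x y => (hcont x y).neg) (fun i : {i // d i < 0} => v i) t
    (aux_diag_pos (- B t) _ (fun i j hij => by simpa using hoo _ i j hij)
      fun i => by simpa using i.2)
  have hc1 : Fintype.card {i // d i < 0} + Fintype.card {i // 0 ≤ d i}
      = Module.finrank ℝ X := by
    have := Fintype.card_subtype_compl (fun i => d i < 0)
    have h2 := Fintype.card_subtype_le (fun i => d i < 0)
    simp only [not_lt, Fintype.card_fin] at this h2
    omega
  have hc2 : Fintype.card {i // 0 ≤ d i} =
      Fintype.card {i // 0 < d i} + Fintype.card {i // d i = 0} := by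
    rw [← Fintype.card_subtype_or_disjoint]
    · refine Fintype.card_congr (Equiv.subtypeEquivRight fun i => ?_)
      rw [le_iff_lt_or_eq, eq_comm (a := (0 : ℝ))]
    · rw [Pi.disjoint_iff]
      intro i
      rw [Prop.disjoint_iff]
      rintro ⟨h1, h2⟩
      exact h1.ne h2.symm
  have hk : Fintype.card {i // d i = 0} ≤ Module.finrank ℝ (LinearMap.ker (B t)) := by
    rw [← finrank_span_eq_card (hli fun i => d i = 0)]
    refine Submodule.finrank_mono (Submodule.span_le.2 ?_)
    rintro _ ⟨i, rfl⟩
    refine LinearMap.mem_ker.2 (v.ext fun j => ?_)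
    by_cases hij : (i : Fin _) = j
    · subst hij
      exact i.2
    · exact ho _ _ hij
  have ht1 : indexOn (fun x y => B t x y) Set.univ ≤ (Fintype.card {i // d i < 0} : ℕ) :=
    aux_upper (B t) _ (hli fun i => 0 ≤ d i) (fun c => by
      rw [aux_diag (B t) _ (hoo _)]
      exact Finset.sum_nonneg fun i _ => mul_nonneg (sq_nonneg _) i.2) _ hc1.ge
  obtain ⟨ε, hε, h⟩ := Metric.eventually_nhds_iff.1 (hpos.and hneg)
  have hlow : ∀ s, |s - t| < ε →
      (Fintype.card {i // d i < 0} : ℕ∞) ≤ indexOn (fun x y => B s x y) Set.univ :=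
    fun s hs => aux_lower (B s) _ (hli fun i => d i < 0) fun c hc => by
      have := (h (y := s) hs).2 c hc
      rw [LinearMap.neg_apply, LinearMap.neg_apply] at this
      linarith
  refine ⟨ε, hε, fun s hs => ⟨ht1.trans (hlow s hs), ?_⟩⟩
  have hup := aux_upper (B s) _ (hli fun i => 0 < d i) (fun c => by
      by_cases hc : c = 0
      · simp [hc]
      · exact ((h (y := s) hs).1 c hc).le)
    (Fintype.card {i // d i < 0} + Module.finrank ℝ (LinearMap.ker (B t))) (by omega)
  refine hup.trans ?_
  push_cast
  gcongr
  exact hlow t (by simpa using hε)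
end
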